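/- There exist absolute constants r₀, C₀, c and n₀ such that the following holds. Let n ≥ n₀, k ≥ 3, r ≥ r₀, ℓ ≥ 2, set D := rk, and assume Dℓ < 0.3·log n / log log n. Let δ ∈ (0,1] with δ²·n^{0.1} ≥ c·log n, and let m be an integer with binom(n,k) ≥ m ≥ (4·ℓ^k·k^{k/2+1} / (k!·2^{k/2})) · n^{k/2} / (δ²·D^{k/2−1}); set p := m / binom(n,k). Then there exists a randomized estimator x̂, i.e., a measurable function of z ∈ {0,±1}^{binom([n],k)} and of internal randomness independent of z, such that for every x ∈ {±1}^n: if k is odd, Pr_{z∼P_x}[x̂(z) = x] ≥ 1 − C₀·ℓ^{−kD}, and if k is even, Pr_{z∼P_x}[x̂(z) ∈ {x, −x}] ≥ 1 − C₀·ℓ^{−kD}. -/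

import Mathlib

open Finset

/-- The index set of `k`-element subsets of `[n]`, used to index the coordinates of an
observation `z ∈ {0,±1}^{binom([n],k)}`. -/
abbrev KSet (n k : ℕ) := {α : Finset (Fin n) // α.card = k}

/-- Coordinate weights under the null model `Q`: value `0` with probability `1−p`,
values `+1` and `−1` each with probability `p/2`. -/
noncomputable def qWeight (p : ℝ) : Fin 3 → ℝ := ![1 - p, p / 2, p / 2]

/-- Coordinate weights under the planted model `P_x`: the coordinate is `0` with probability
`1−p`, equals `x_α` with probability `p(1+δ)/2` and `−x_α` with probability `p(1−δ)/2`. -/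
noncomputable def pWeight (p δ : ℝ) : Fin 3 → ℝ := ![1 - p, p * (1 + δ) / 2, p * (1 - δ) / 2]

/-- Realized coordinate values under the null model. -/
noncomputable def qVal : Fin 3 → ℝ := ![0, 1, -1]

/-- Realized coordinate values under the planted model: `0`, `x_α`, `−x_α`,
where `x_α = ∏_{i∈α} x_i`. -/
noncomputable def pVal {n k : ℕ} (x : Fin n → ℝ) (α : KSet n k) : Fin 3 → ℝ :=
  ![0, ∏ i ∈ α.1, x i, -∏ i ∈ α.1, x i]

/-- Expectation of a statistic `F` of the observation `z` under the null (Bernoulli) model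
`Q`, in which the coordinates `z(α)` are independent with law given by `qWeight p`. -/
noncomputable def expQ (n k : ℕ) (p : ℝ) (F : (KSet n k → ℝ) → ℝ) : ℝ :=
  ∑ ω : KSet n k → Fin 3, (∏ α : KSet n k, qWeight p (ω α)) * F (fun α => qVal (ω α))

/-- Expectation of a statistic `F` of the observation `z` under the planted Bernoulli model
`P_x`, in which the coordinates `z(α) = b_α x_α ξ_α` are independent. -/
noncomputable def expP (n k : ℕ) (p δ : ℝ) (x : Fin n → ℝ) (F : (KSet n k → ℝ) → ℝ) : ℝ :=
  ∑ ω : KSet n k → Fin 3, (∏ α : KSet n k, pWeight p δ (ω α)) * F (fun α => pVal x α (ω α))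

/-- The vector obtained from `x` by reversing the signs of the coordinates in `B`. -/
noncomputable def flipSigns {n : ℕ} (x : Fin n → ℝ) (B : Finset (Fin n)) : Fin n → ℝ :=
  fun i => if i ∈ B then -x i else x i

/-- The correlation `∑ α, z(α) y_α` of an observation `z` with the `k`-th tensor power of `y`. -/
noncomputable def corr {n k : ℕ} (z : KSet n k → ℝ) (y : Fin n → ℝ) : ℝ :=
  ∑ α : KSet n k, z α * ∏ i ∈ α.1, y i

lemma prod_flipSigns {n : ℕ} (x : Fin n → ℝ) (B α : Finset (Fin n)) :
    ∏ i ∈ α, flipSigns x B i = (-1) ^ (α ∩ B).card * ∏ i ∈ α, x i := by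
  have h : ∀ i, flipSigns x B i = (if i ∈ B then -1 else 1) * x i := by
    intro i; unfold flipSigns; split_ifs <;> simp
  simp only [h, prod_mul_distrib]
  rw [prod_ite_mem, prod_const]

lemma prod_eq_one_or_neg_one {n : ℕ} {x : Fin n → ℝ} (hx : ∀ i, x i = 1 ∨ x i = -1)
    (α : Finset (Fin n)) : ∏ i ∈ α, x i = 1 ∨ ∏ i ∈ α, x i = -1 := by
  induction α using Finset.induction_on with
  | empty => simp
  | insert a s ha ih =>
    rw [prod_insert ha]
    rcases hx a with h | h <;> rcases ih with h' | h' <;> simp [h, h']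

/-- Exactly one of `β ∪ {i}`, `β ∪ {j}` meets `B` in an odd number of points when `i ∈ B`,
`j ∉ B` and `β` avoids both. -/
lemma card_mul_choose_le_card_odd (n k : ℕ) (hk : 1 ≤ k) (B : Finset (Fin n)) :
    B.card * (n - B.card) * (n - 2).choose (k - 1) ≤
      ((powersetCard k (univ : Finset (Fin n))).filter (fun α => Odd (α ∩ B).card)).card
        * (k * (n - k)) := by
  classical
  set S : Finset (Σ _ : Fin n × Fin n, Finset (Fin n)) :=
    (B ×ˢ Bᶜ).sigma (fun q => powersetCard (k - 1) (univ \ {q.1, q.2})) with hS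
  set T : Finset (Σ _ : Finset (Fin n), Fin n × Fin n) :=
    ((powersetCard k (univ : Finset (Fin n))).filter (fun α => Odd (α ∩ B).card)).sigma
      (fun α => α ×ˢ αᶜ) with hT
  have hScard : S.card = B.card * (n - B.card) * (n - 2).choose (k - 1) := by
    rw [hS, card_sigma]
    rw [sum_congr rfl (g := fun _ => (n - 2).choose (k - 1)), sum_const, card_product,
      card_compl, Fintype.card_fin, smul_eq_mul]
    rintro ⟨i, j⟩ hij
    simp only [mem_product, mem_compl] at hij
    have hne : i ≠ j := fun h => hij.2 (h ▸ hij.1)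
    rw [card_powersetCard, card_sdiff_of_subset (subset_univ _), card_pair hne, card_univ,
      Fintype.card_fin]
  have hTcard : T.card = ((powersetCard k (univ : Finset (Fin n))).filter
      (fun α => Odd (α ∩ B).card)).card * (k * (n - k)) := by
    rw [hT, card_sigma, sum_congr rfl (g := fun _ => k * (n - k)), sum_const, smul_eq_mul]
    intro α hα
    simp only [mem_filter, mem_powersetCard, subset_univ, true_and] at hα
    rw [card_product, card_compl, Fintype.card_fin, hα.1]
  rw [← hScard, ← hTcard]
  refine card_le_card_of_injOn
    (fun s => if Odd (s.2 ∩ B).card then ⟨insert s.1.2 s.2, (s.1.2, s.1.1)⟩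
      else ⟨insert s.1.1 s.2, (s.1.1, s.1.2)⟩) ?_ ?_
  · rintro ⟨⟨i, j⟩, β⟩ hs
    simp only [hS, coe_sigma, Set.mem_sigma_iff, mem_coe, mem_product, mem_compl,
      mem_powersetCard] at hs
    obtain ⟨⟨hi, hj⟩, hβ, hc⟩ := hs
    have hiβ : i ∉ β := fun h => by simpa using hβ h
    have hjβ : j ∉ β := fun h => by simpa using hβ h
    have hne : i ≠ j := fun h => hj (h ▸ hi)
    by_cases ho : Odd (β ∩ B).card
    · simp only [ho, if_true, hT, coe_sigma, Set.mem_sigma_iff, mem_coe, mem_filter,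
        mem_powersetCard, subset_univ, true_and, mem_product, mem_compl]
      rw [card_insert_of_notMem hjβ, insert_inter_of_notMem hj]
      refine ⟨⟨by omega, ho⟩, by simp, by simp [hne, hiβ]⟩
    · simp only [ho, if_false, hT, coe_sigma, Set.mem_sigma_iff, mem_coe, mem_filter,
        mem_powersetCard, subset_univ, true_and, mem_product, mem_compl]
      rw [card_insert_of_notMem hiβ, insert_inter_of_mem hi, card_insert_of_notMem (by simp [hiβ])]
      refine ⟨⟨by omega, ?_⟩, by simp, by simp [hne.symm, hjβ]⟩
      rw [Nat.not_odd_iff_even] at ho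
      exact ho.add_one
  · rintro ⟨⟨i, j⟩, β⟩ hs ⟨⟨i', j'⟩, β'⟩ hs' h
    simp only [hS, coe_sigma, Set.mem_sigma_iff, mem_coe, mem_product, mem_compl,
      mem_powersetCard] at hs hs'
    obtain ⟨⟨hi, hj⟩, hβ, hc⟩ := hs
    obtain ⟨⟨hi', hj'⟩, hβ', hc'⟩ := hs'
    have hiβ : i ∉ β := fun h => by simpa using hβ h
    have hjβ : j ∉ β := fun h => by simpa using hβ h
    have hiβ' : i' ∉ β' := fun h => by simpa using hβ' h
    have hjβ' : j' ∉ β' := fun h => by simpa using hβ' h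
    by_cases ho : Odd (β ∩ B).card <;> by_cases ho' : Odd (β' ∩ B).card <;>
      simp only [ho, ho', if_true, if_false, Sigma.mk.injEq, heq_eq_eq, Prod.mk.injEq] at h
    · obtain ⟨h1, rfl, rfl⟩ := h
      have := congrArg (fun s => s.erase j) h1
      simp only [erase_insert hjβ, erase_insert hjβ'] at this
      subst this; rfl
    · exact absurd (h.2.1 ▸ hi') hj
    · exact absurd (h.2.1 ▸ hi) hj'
    · obtain ⟨h1, rfl, rfl⟩ := h
      have := congrArg (fun s => s.erase i) h1
      simp only [erase_insert hiβ, erase_insert hiβ'] at this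
      subst this; rfl

lemma choose_mul_card_le (n k : ℕ) (hk : 1 ≤ k) (hkn : k < n) (B : Finset (Fin n)) :
    n.choose k * (B.card * (n - B.card)) ≤
      ((powersetCard k (univ : Finset (Fin n))).filter (fun α => Odd (α ∩ B).card)).card
        * (n * (n - 1)) := by
  have h := card_mul_choose_le_card_odd n k hk B
  set N := ((powersetCard k (univ : Finset (Fin n))).filter (fun α => Odd (α ∩ B).card)).card
  obtain ⟨k, rfl⟩ : ∃ j, k = j + 1 := ⟨k - 1, by omega⟩
  obtain ⟨n', rfl⟩ : ∃ j, n = j + 2 := ⟨n - 2, by omega⟩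
  simp only [Nat.add_sub_cancel] at h ⊢
  have e1 : (n' + 1 + 1) * (n' + 1).choose k = (n' + 2).choose (k + 1) * (k + 1) :=
    Nat.add_one_mul_choose_eq (n' + 1) k
  have e2 : (n' + 1) * n'.choose k = (n' + 1).choose k * (n' + 1 - k) := by
    have := Nat.choose_mul_succ_eq n' k
    rw [mul_comm]; exact this
  have e3 : n' + 2 - (k + 1) = n' + 1 - k := by omega
  rw [e3] at h
  have hpos : 0 < (k + 1) * (n' + 1 - k) := Nat.mul_pos (by omega) (by omega)
  refine Nat.le_of_mul_le_mul_right ?_ hpos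
  calc (n' + 2).choose (k + 1) * (B.card * (n' + 2 - B.card)) * ((k + 1) * (n' + 1 - k))
      = ((n' + 2).choose (k + 1) * (k + 1)) * (n' + 1 - k) * (B.card * (n' + 2 - B.card)) := by ring
    _ = (n' + 2) * ((n' + 1) * n'.choose k) * (B.card * (n' + 2 - B.card)) := by
        rw [← e1, e2]; ring
    _ = (n' + 2) * (n' + 1) * (B.card * (n' + 2 - B.card) * n'.choose k) := by ring
    _ ≤ (n' + 2) * (n' + 1) * (N * ((k + 1) * (n' + 1 - k))) := Nat.mul_le_mul_left _ h
    _ = _ := by simp only [show n' + 2 - 1 = n' + 1 from rfl]; ring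

lemma expP_mono {n k : ℕ} {p δ : ℝ} (hp0 : 0 ≤ p) (hp1 : p ≤ 1) (hδ0 : 0 ≤ δ) (hδ1 : δ ≤ 1)
    (x : Fin n → ℝ) {F G : (KSet n k → ℝ) → ℝ}
    (h : ∀ ω : KSet n k → Fin 3, F (fun α => pVal x α (ω α)) ≤ G (fun α => pVal x α (ω α))) :
    expP n k p δ x F ≤ expP n k p δ x G := by
  refine sum_le_sum fun ω _ => mul_le_mul_of_nonneg_left (h ω) (prod_nonneg fun α _ => ?_)
  generalize ω α = j
  fin_cases j
  · simpa [pWeight] using hp1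
  · simp only [pWeight]
    show 0 ≤ p * (1 + δ) / 2
    positivity
  · show 0 ≤ p * (1 - δ) / 2
    have := sub_nonneg.2 hδ1
    positivity

/-- Product test functions factorize under the planted model. -/
lemma expP_prod {n k : ℕ} (p δ : ℝ) (x : Fin n → ℝ) (f : KSet n k → ℝ → ℝ) :
    expP n k p δ x (fun z => ∏ α, f α (z α)) =
      ∏ α, ∑ j, pWeight p δ j * f α (pVal x α j) := by
  unfold expP
  rw [Finset.prod_univ_sum]
  simp [prod_mul_distrib]

lemma expP_const_sub_sum {n k : ℕ} (p δ : ℝ) (x : Fin n → ℝ) {ι : Type*} (s : Finset ι)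
    (f : ι → (KSet n k → ℝ) → ℝ) :
    expP n k p δ x (fun z => 1 - ∑ B ∈ s, f B z) = 1 - ∑ B ∈ s, expP n k p δ x (f B) := by
  have h1 : expP n k p δ x (fun _ => 1) = 1 := by
    have := expP_prod p δ x (fun (_ : KSet n k) _ => 1)
    simp only [prod_const_one, mul_one] at this
    rw [this]
    refine prod_eq_one fun α _ => ?_
    simp [Fin.sum_univ_three, pWeight]; ring
  calc _ = expP n k p δ x (fun _ => 1) - ∑ B ∈ s, expP n k p δ x (f B) := by
        unfold expP
        rw [sum_comm, ← sum_sub_distrib]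
        refine sum_congr rfl fun ω _ => ?_
        rw [mul_sub, mul_sum]
    _ = _ := by rw [h1]

lemma planted_mgf_le {p δ : ℝ} (hp0 : 0 ≤ p) (hδ0 : 0 ≤ δ) (hδ1 : δ ≤ 1) :
    1 - p + p * (1 + δ) / 2 * Real.exp (-(δ / 2)) + p * (1 - δ) / 2 * Real.exp (δ / 2)
      ≤ Real.exp (-(p * δ ^ 2 / 4)) := by
  have b : ∀ t : ℝ, |t| ≤ 1 → Real.exp t ≤ 1 + t + t ^ 2 := fun t ht => by
    have := (abs_le.1 (Real.abs_exp_sub_one_sub_id_le ht)).2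
    linarith
  have b1 := b (-(δ / 2)) (by rw [abs_neg, abs_of_nonneg (by linarith)]; linarith)
  have b2 := b (δ / 2) (by rw [abs_of_nonneg (by linarith)]; linarith)
  have c1 := mul_le_mul_of_nonneg_left b1 (show 0 ≤ p * (1 + δ) / 2 by positivity)
  have c2 := mul_le_mul_of_nonneg_left b2
    (show 0 ≤ p * (1 - δ) / 2 by have := sub_nonneg.2 hδ1; positivity)
  have := Real.add_one_le_exp (-(p * δ ^ 2 / 4))
  nlinarith

/-- Chernoff bound for the event that `flipSigns x B` correlates better than `x` does. -/
lemma expP_exp_corr_le {n k : ℕ} {p δ : ℝ} (hp0 : 0 ≤ p) (hp1 : p ≤ 1) (hδ0 : 0 ≤ δ)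
    (hδ1 : δ ≤ 1) {x : Fin n → ℝ} (hx : ∀ i, x i = 1 ∨ x i = -1) (B : Finset (Fin n)) :
    expP n k p δ x (fun z => Real.exp (δ / 4 * (corr z (flipSigns x B) - corr z x))) ≤
      Real.exp (-(p * δ ^ 2 / 4) *
        ((powersetCard k (univ : Finset (Fin n))).filter (fun α => Odd (α ∩ B).card)).card) := by
  have h1 : (fun z : KSet n k → ℝ => Real.exp (δ / 4 * (corr z (flipSigns x B) - corr z x))) =
      fun z => ∏ α : KSet n k,
        Real.exp (δ / 4 * (z α * (((-1) ^ (α.1 ∩ B).card - 1) * ∏ i ∈ α.1, x i))) := by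
    funext z
    rw [← Real.exp_sum, ← mul_sum]
    congr 2
    unfold corr
    rw [← sum_sub_distrib]
    refine sum_congr rfl fun α _ => ?_
    rw [prod_flipSigns]; ring
  rw [h1, expP_prod p δ x (fun α t =>
    Real.exp (δ / 4 * (t * (((-1) ^ (α.1 ∩ B).card - 1) * ∏ i ∈ α.1, x i))))]
  have hcard : ((powersetCard k (univ : Finset (Fin n))).filter
      (fun α => Odd (α ∩ B).card)).card =
      ((univ : Finset (KSet n k)).filter (fun α => Odd (α.1 ∩ B).card)).card := by
    refine (card_bij (fun α _ => α.1) ?_ ?_ ?_).symm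
    · intro α hα
      simpa [α.2] using hα
    · intro α _ β _ h
      exact Subtype.ext h
    · intro α hα
      simp only [mem_filter, mem_powersetCard, subset_univ, true_and] at hα
      exact ⟨⟨α, hα.1⟩, by simpa using hα.2, rfl⟩
  rw [hcard, mul_comm, Real.exp_nat_mul, ← prod_const, prod_filter]
  refine prod_le_prod (fun α _ => sum_nonneg fun j _ => ?_) fun α _ => ?_
  · refine mul_nonneg ?_ (Real.exp_pos _).le
    fin_cases j
    · simpa [pWeight] using hp1
    · show 0 ≤ p * (1 + δ) / 2
      positivity
    · show 0 ≤ p * (1 - δ) / 2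
      have := sub_nonneg.2 hδ1
      positivity
  · have hsq : (∏ i ∈ α.1, x i) * ∏ i ∈ α.1, x i = 1 := by
      rcases prod_eq_one_or_neg_one hx α.1 with h | h <;> rw [h] <;> norm_num
    split_ifs with ho
    · refine le_trans (le_of_eq ?_) (planted_mgf_le hp0 hδ0 hδ1)
      rw [ho.neg_one_pow]
      simp only [Fin.sum_univ_three, pWeight, pVal]
      simp only [Matrix.cons_val_zero, Matrix.cons_val_one, Matrix.cons_val]
      congr 1
      · congr 1
        · simp
        · congr 2
          linear_combination (-(δ / 2)) * hsq
      · congr 2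
        linear_combination (δ / 2) * hsq
    · rw [Nat.not_odd_iff_even] at ho
      rw [ho.neg_one_pow]
      simp only [Fin.sum_univ_three, pWeight, pVal, sub_self, zero_mul, mul_zero, Real.exp_zero]
      simp only [Matrix.cons_val_zero, Matrix.cons_val_one, Matrix.cons_val]
      apply le_of_eq; ring

lemma sum_pow_card_add_pow_card_compl_le (n : ℕ) {q : ℝ} (hq0 : 0 ≤ q) (hq : n * q ≤ 1) :
    (∑ B : Finset (Fin n), if B = ∅ then 0 else q ^ B.card) +
      (∑ B : Finset (Fin n), if B = univ then 0 else q ^ (n - B.card)) ≤ 4 * (n * q) := by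
  have hpow : (1 + q) ^ n ≤ 1 + 2 * (n * q) := by
    have h1 : (1 + q) ^ n ≤ Real.exp (n * q) := by
      rw [Real.exp_nat_mul]
      exact pow_le_pow_left₀ (by linarith) (by linarith [Real.add_one_le_exp q]) n
    have h0 : 0 ≤ n * q := by positivity
    have h2 := Real.abs_exp_sub_one_le (x := n * q) (by rwa [abs_of_nonneg h0])
    rw [abs_of_nonneg h0] at h2
    linarith [(abs_le.1 h2).2]
  have e1 : (∑ B : Finset (Fin n), if B = ∅ then 0 else q ^ B.card) = (1 + q) ^ n - 1 := by
    have := Finset.sum_pow_mul_eq_add_pow q 1 (univ : Finset (Fin n))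
    simp only [one_pow, mul_one, powerset_univ, card_univ, Fintype.card_fin] at this
    rw [add_comm 1 q, ← this, eq_sub_iff_add_eq]
    have h : (1 : ℝ) = ∑ B : Finset (Fin n), if B = ∅ then 1 else 0 := by simp
    rw [h, ← sum_add_distrib]
    refine sum_congr rfl fun B _ => ?_
    split_ifs with hB <;> simp [hB]
  have e2 : (∑ B : Finset (Fin n), if B = univ then 0 else q ^ (n - B.card)) =
      (1 + q) ^ n - 1 := by
    have := Finset.sum_pow_mul_eq_add_pow 1 q (univ : Finset (Fin n))
    simp only [one_pow, one_mul, powerset_univ, card_univ, Fintype.card_fin] at this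
    rw [← this, eq_sub_iff_add_eq]
    have h : (1 : ℝ) = ∑ B : Finset (Fin n), if B = univ then 1 else 0 := by simp
    rw [h, ← sum_add_distrib]
    refine sum_congr rfl fun B _ => ?_
    split_ifs with hB <;> simp [hB]
  rw [e1, e2]; linarith

/-- The failure exponent of a single competitor, in terms of its distance to `±x`. -/
lemma exp_card_odd_le {n k : ℕ} (hk : 1 ≤ k) (hkn : k < n) {m : ℕ} {δ : ℝ}
    (B : Finset (Fin n)) (hB : B ≠ ∅) (hB' : B = univ → Odd k) :
    Real.exp (-((m : ℝ) / (n.choose k : ℝ) * δ ^ 2 / 4) *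
        ((powersetCard k (univ : Finset (Fin n))).filter (fun α => Odd (α ∩ B).card)).card) ≤
      (if B = ∅ then 0 else Real.exp (-(m * δ ^ 2 / (8 * n))) ^ B.card) +
      (if B = univ then 0 else Real.exp (-(m * δ ^ 2 / (8 * n))) ^ (n - B.card)) := by
  have hC : 0 < (n.choose k : ℝ) := by exact_mod_cast Nat.choose_pos hkn.le
  have hn : 0 < (n : ℝ) := by exact_mod_cast (by omega : 0 < n)
  have hn1 : 0 < (n : ℝ) - 1 := by
    have : (2 : ℝ) ≤ n := by exact_mod_cast (by omega : 2 ≤ n)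
    linarith
  have hN : (n.choose k : ℝ) * (B.card * (n - B.card)) ≤
      ((powersetCard k (univ : Finset (Fin n))).filter (fun α => Odd (α ∩ B).card)).card
        * (n * (n - 1)) := by
    have h := choose_mul_card_le n k hk hkn B
    have hb : B.card ≤ n := by simpa using card_le_univ B
    have h' := (Nat.cast_le (α := ℝ)).2 h
    push_cast [Nat.cast_sub hb, Nat.cast_sub (show 1 ≤ n by omega)] at h'
    exact h'
  have hNuniv : B = univ →
      (((powersetCard k (univ : Finset (Fin n))).filter (fun α => Odd (α ∩ B).card)).card : ℝ)
        = n.choose k := by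
    intro h
    subst h
    rw [filter_true_of_mem, card_powersetCard, card_univ, Fintype.card_fin]
    intro α hα
    rw [inter_univ, (mem_powersetCard.1 hα).2]
    exact hB' rfl
  set N : ℝ :=
    (((powersetCard k (univ : Finset (Fin n))).filter (fun α => Odd (α ∩ B).card)).card : ℝ)
  have hmδ : 0 ≤ m * δ ^ 2 := by positivity
  have key : ∀ s : ℕ, (n.choose k : ℝ) * s ≤ N * (2 * n) →
      Real.exp (-((m : ℝ) / (n.choose k : ℝ) * δ ^ 2 / 4) * N) ≤
        Real.exp (-(m * δ ^ 2 / (8 * n))) ^ s := by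
    intro s hs
    rw [← Real.exp_nat_mul, Real.exp_le_exp, mul_neg, neg_mul, neg_le_neg_iff]
    have : (s : ℝ) / (2 * n) ≤ N / n.choose k := by
      rw [div_le_div_iff₀ (by positivity) hC]; linarith
    calc (s : ℝ) * (m * δ ^ 2 / (8 * n)) = m * δ ^ 2 / 4 * (s / (2 * n)) := by
          field_simp; ring
      _ ≤ m * δ ^ 2 / 4 * (N / n.choose k) := by gcongr
      _ = _ := by ring
  rw [if_neg hB]
  by_cases hu : B = univ
  · rw [if_pos hu, add_zero]
    apply key
    rw [hNuniv hu, hu, card_univ, Fintype.card_fin]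
    gcongr; linarith
  · rw [if_neg hu]
    have hb : B.card ≤ n := by simpa using card_le_univ B
    have hbc : ((n - B.card : ℕ) : ℝ) = n - B.card := Nat.cast_sub hb
    have hN0 : 0 ≤ N := Nat.cast_nonneg _
    have hb' : (B.card : ℝ) ≤ n := by exact_mod_cast hb
    have hb0 : (0 : ℝ) ≤ B.card := Nat.cast_nonneg _
    have up : N * (n * (n - 1)) ≤ N * (n * n) := by gcongr; linarith
    rcases le_total (2 * (B.card : ℝ)) n with h | h
    · refine le_trans (key _ ?_) (le_add_of_nonneg_right (by positivity))
      have : (n.choose k : ℝ) * (B.card * (n / 2)) ≤ (n.choose k : ℝ) * (B.card * (n - B.card)) := by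
        gcongr; linarith
      refine le_of_mul_le_mul_right ?_ hn
      linarith
    · refine le_trans (key _ ?_) (le_add_of_nonneg_left (by positivity))
      rw [hbc]
      have : (n.choose k : ℝ) * ((n / 2) * (n - B.card)) ≤
          (n.choose k : ℝ) * (B.card * (n - B.card)) := by
        have := sub_nonneg.2 hb'
        gcongr; linarith
      refine le_of_mul_le_mul_right ?_ hn
      linarith

/-- A maximizer of the correlation over the sign vectors. -/
lemma exists_corr_maximizer (n k : ℕ) : ∃ f : (KSet n k → ℝ) → (Fin n → ℝ),
    ∀ z, (∀ i, f z i = 1 ∨ f z i = -1) ∧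
      ∀ y : Fin n → ℝ, (∀ i, y i = 1 ∨ y i = -1) → corr z y ≤ corr z (f z) := by
  have h : ∀ z : KSet n k → ℝ, ∃ v : Fin n → ℝ, (∀ i, v i = 1 ∨ v i = -1) ∧
      ∀ y : Fin n → ℝ, (∀ i, y i = 1 ∨ y i = -1) → corr z y ≤ corr z v := by
    intro z
    obtain ⟨v, hv, hmax⟩ := exists_max_image
      (Fintype.piFinset fun _ : Fin n => ({1, -1} : Finset ℝ)) (corr z) ⟨fun _ => 1, by simp⟩
    simp only [Fintype.mem_piFinset, mem_insert, mem_singleton] at hv hmax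
    exact ⟨v, hv, hmax⟩
  choose f hf using h
  exact ⟨f, hf⟩

lemma exists_eq_flipSigns {n : ℕ} {x y : Fin n → ℝ} (hx : ∀ i, x i = 1 ∨ x i = -1)
    (hy : ∀ i, y i = 1 ∨ y i = -1) : ∃ B, y = flipSigns x B := by
  classical
  refine ⟨univ.filter fun i => y i ≠ x i, funext fun i => ?_⟩
  unfold flipSigns
  by_cases h : y i = x i
  · simp [h]
  · rcases hx i with h1 | h1 <;> rcases hy i with h2 | h2 <;> simp_all

/-- Any estimator that maximizes the correlation succeeds, up to the sign ambiguity for even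
`k`, unless some competitor beats the planted vector. -/
lemma one_sub_le_expP_of_maximizer {n k : ℕ} (hk : 1 ≤ k) (hkn : k < n) {m : ℕ}
    (hm : m ≤ n.choose k) {δ : ℝ} (hδ0 : 0 ≤ δ) (hδ1 : δ ≤ 1)
    (hq : n * Real.exp (-(m * δ ^ 2 / (8 * n))) ≤ 1)
    {f : (KSet n k → ℝ) → (Fin n → ℝ)} (hf : ∀ z, (∀ i, f z i = 1 ∨ f z i = -1) ∧
      ∀ y : Fin n → ℝ, (∀ i, y i = 1 ∨ y i = -1) → corr z y ≤ corr z (f z))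
    {x : Fin n → ℝ} (hx : ∀ i, x i = 1 ∨ x i = -1) {G : (KSet n k → ℝ) → ℝ}
    (hG0 : ∀ z, 0 ≤ G z) (hG : ∀ z, f z = x → 1 ≤ G z)
    (hG' : Even k → ∀ z, (f z = fun i => -(x i)) → 1 ≤ G z) :
    1 - 4 * (n * Real.exp (-(m * δ ^ 2 / (8 * n)))) ≤
      expP n k ((m : ℝ) / (n.choose k : ℝ)) δ x G := by
  classical
  have hC : 0 < (n.choose k : ℝ) := by exact_mod_cast Nat.choose_pos hkn.le
  have hp0 : 0 ≤ (m : ℝ) / (n.choose k : ℝ) := by positivity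
  have hp1 : (m : ℝ) / (n.choose k : ℝ) ≤ 1 := by
    rw [div_le_one hC]; exact_mod_cast hm
  set bad : Finset (Finset (Fin n)) := univ.filter fun B => B ≠ ∅ ∧ (B = univ → Odd k) with hbad
  set F : Finset (Fin n) → (KSet n k → ℝ) → ℝ :=
    fun B z => Real.exp (δ / 4 * (corr z (flipSigns x B) - corr z x)) with hF
  have hpt : ∀ z, 1 - ∑ B ∈ bad, F B z ≤ G z := by
    intro z
    have hsum0 : 0 ≤ ∑ B ∈ bad, F B z := sum_nonneg fun B _ => (Real.exp_pos _).le
    obtain ⟨B, hB⟩ := exists_eq_flipSigns hx (hf z).1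
    by_cases hBbad : B ∈ bad
    · have h1 : 1 ≤ F B z := by
        simp only [hF, ← hB]
        refine Real.one_le_exp (mul_nonneg (by linarith) (sub_nonneg.2 ((hf z).2 x hx)))
      have h2 := single_le_sum (f := fun B => F B z) (fun B _ => (Real.exp_pos _).le) hBbad
      have := hG0 z
      linarith
    · have : 1 ≤ G z := by
        by_cases hB0 : B = ∅
        · exact hG z (by rw [hB, hB0]; funext i; simp [flipSigns])
        · simp only [hbad, mem_filter, mem_univ, true_and, not_and, Classical.not_imp,
            Nat.not_odd_iff_even] at hBbad
          obtain ⟨hu, he⟩ := hBbad hB0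
          exact hG' he z (by rw [hB, hu]; funext i; simp [flipSigns])
      linarith
  refine le_trans ?_ (expP_mono (F := fun z => 1 - ∑ B ∈ bad, F B z) hp0 hp1 hδ0 hδ1 x
    (fun ω => hpt _))
  rw [expP_const_sub_sum]
  have hsum : ∑ B ∈ bad, expP n k ((m : ℝ) / (n.choose k : ℝ)) δ x (F B) ≤
      4 * (n * Real.exp (-(m * δ ^ 2 / (8 * n)))) := by
    refine le_trans ?_ (sum_pow_card_add_pow_card_compl_le n (Real.exp_pos _).le hq)
    rw [← sum_add_distrib]
    refine le_trans (sum_le_sum fun B hB => ?_)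
      (sum_le_sum_of_subset_of_nonneg (subset_univ bad) fun B _ _ => by positivity)
    simp only [hbad, mem_filter, mem_univ, true_and] at hB
    exact (expP_exp_corr_le hp0 hp1 hδ0 hδ1 hx B).trans
      (exp_card_odd_le hk hkn B hB.1 hB.2)
  linarith

open Filter in
lemma exists_threshold : ∃ n₀ : ℕ, ∀ n : ℕ, n₀ ≤ n →
    1 ≤ Real.log (Real.log n) ∧ 1 ≤ Real.log n ∧
    8 * Real.log n ^ 6 * (Real.log n + Real.log n ^ 2) ≤ (n : ℝ) ^ (1 / 2 : ℝ) ∧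
    Real.log n ^ 4 ≤ n ∧ Real.log n < n ∧ 1 ≤ n := by
  have hlog : Tendsto (fun n : ℕ => Real.log n) atTop atTop :=
    Real.tendsto_log_atTop.comp tendsto_natCast_atTop_atTop
  have h1 := (Real.tendsto_log_atTop.comp hlog).eventually_ge_atTop 1
  have h2 := hlog.eventually_ge_atTop 1
  have h3 : ∀ᶠ n : ℕ in atTop, Real.log n ^ 8 ≤ 1 / 16 * (n : ℝ) ^ (1 / 2 : ℝ) := by
    have := (isLittleO_log_rpow_rpow_atTop (8 : ℝ) (show (0 : ℝ) < 1 / 2 by norm_num)).bound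
      (show (0 : ℝ) < 1 / 16 by norm_num)
    filter_upwards [tendsto_natCast_atTop_atTop.eventually this, h2] with n hn hl
    have e : Real.log n ^ (8 : ℝ) = Real.log n ^ 8 := by
      exact_mod_cast Real.rpow_natCast (Real.log n) 8
    rw [e, Real.norm_of_nonneg (by positivity), Real.norm_of_nonneg (by positivity)] at hn
    exact hn
  obtain ⟨n₀, hn₀⟩ := eventually_atTop.1 (h1.and (h2.and (h3.and (eventually_ge_atTop 1))))
  refine ⟨n₀, fun n hn => ?_⟩
  obtain ⟨a1, a2, a3, a4⟩ := hn₀ n hn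
  have a4' : (1 : ℝ) ≤ n := by exact_mod_cast a4
  have a5 : (n : ℝ) ^ (1 / 2 : ℝ) ≤ n := by
    conv_rhs => rw [← Real.rpow_one (n : ℝ)]
    exact Real.rpow_le_rpow_of_exponent_le a4' (by norm_num)
  have a6 : Real.log n ^ 4 ≤ Real.log n ^ 8 := pow_le_pow_right₀ a2 (by norm_num)
  have a7 : Real.log n ^ 7 ≤ Real.log n ^ 8 := pow_le_pow_right₀ a2 (by norm_num)
  refine ⟨a1, a2, ?_, ?_, ?_, a4⟩
  · nlinarith
  · linarith
  · have := Real.add_one_le_exp (Real.log n)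
    rw [Real.exp_log (by linarith)] at this
    linarith

/-- The sample size hypothesis gives a signal of order `n ^ (3 / 2)` up to logarithms. -/
lemma signal_lower_bound {n k D ℓ m : ℕ} {δ L : ℝ} (hk : 3 ≤ k) (hkD : k ≤ D) (hℓ : 1 ≤ ℓ)
    (hδ0 : 0 < δ) (hDL : (D : ℝ) ≤ L) (hL : L ^ 4 ≤ n)
    (hm : 4 * (ℓ : ℝ) ^ k * (k : ℝ) ^ ((k : ℝ) / 2 + 1)
        / ((k.factorial : ℝ) * (2 : ℝ) ^ ((k : ℝ) / 2))
        * (n : ℝ) ^ ((k : ℝ) / 2) / (δ ^ 2 * (D : ℝ) ^ ((k : ℝ) / 2 - 1)) ≤ (m : ℝ)) :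
    (n : ℝ) * (n : ℝ) ^ (1 / 2 : ℝ) / L ^ 6 ≤ m * δ ^ 2 := by
  have hk' : (3 : ℝ) ≤ k := by exact_mod_cast hk
  have hkD' : (k : ℝ) ≤ D := by exact_mod_cast hkD
  have hD3 : (3 : ℝ) ≤ D := hk'.trans hkD'
  have hL0 : 0 < L := by linarith
  have hn : 0 < (n : ℝ) := lt_of_lt_of_le (by positivity) hL
  have hden : (k.factorial : ℝ) * (2 : ℝ) ^ ((k : ℝ) / 2) * (D : ℝ) ^ ((k : ℝ) / 2 - 1) ≤
      (L ^ 4) ^ ((k : ℝ) / 2) := by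
    have f1 : (k.factorial : ℝ) ≤ (D : ℝ) ^ (k : ℝ) := by
      rw [Real.rpow_natCast]
      calc (k.factorial : ℝ) ≤ (k : ℝ) ^ k := by exact_mod_cast Nat.factorial_le_pow k
        _ ≤ (D : ℝ) ^ k := by gcongr
    have f2 : (2 : ℝ) ^ ((k : ℝ) / 2) ≤ (D : ℝ) ^ ((k : ℝ) / 2) :=
      Real.rpow_le_rpow (by norm_num) (by linarith) (by linarith)
    have f3 : (D : ℝ) ^ ((k : ℝ) / 2 - 1) ≤ (D : ℝ) ^ ((k : ℝ) / 2) :=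
      Real.rpow_le_rpow_of_exponent_le (by linarith) (by linarith)
    calc _ ≤ (D : ℝ) ^ (k : ℝ) * (D : ℝ) ^ ((k : ℝ) / 2) * (D : ℝ) ^ ((k : ℝ) / 2) := by gcongr
      _ = ((D : ℝ) ^ (4 : ℕ)) ^ ((k : ℝ) / 2) := by
          rw [← Real.rpow_natCast, ← Real.rpow_mul (by linarith), ← Real.rpow_add (by linarith),
            ← Real.rpow_add (by linarith)]
          congr 1; push_cast; ring
      _ ≤ _ := by gcongr
  have hnum : 1 ≤ 4 * (ℓ : ℝ) ^ k * (k : ℝ) ^ ((k : ℝ) / 2 + 1) := by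
    have g1 : (1 : ℝ) ≤ (ℓ : ℝ) ^ k := one_le_pow₀ (by exact_mod_cast hℓ)
    have g2 : (1 : ℝ) ≤ (k : ℝ) ^ ((k : ℝ) / 2 + 1) :=
      Real.one_le_rpow (by linarith) (by linarith)
    nlinarith
  have hden0 : 0 < (k.factorial : ℝ) * (2 : ℝ) ^ ((k : ℝ) / 2) * (D : ℝ) ^ ((k : ℝ) / 2 - 1) := by
    have : 0 < (D : ℝ) := by linarith
    positivity
  calc (n : ℝ) * (n : ℝ) ^ (1 / 2 : ℝ) / L ^ 6 = ((n : ℝ) / L ^ 4) ^ (3 / 2 : ℝ) := by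
        rw [Real.div_rpow hn.le (by positivity)]
        congr 1
        · rw [show (3 / 2 : ℝ) = 1 + 1 / 2 by norm_num, Real.rpow_add hn, Real.rpow_one]
        · rw [← Real.rpow_natCast L 4, ← Real.rpow_mul hL0.le, ← Real.rpow_natCast L 6]
          norm_num
    _ ≤ ((n : ℝ) / L ^ 4) ^ ((k : ℝ) / 2) := by
        refine Real.rpow_le_rpow_of_exponent_le ?_ (by linarith)
        rw [one_le_div (by positivity)]; exact hL
    _ = (n : ℝ) ^ ((k : ℝ) / 2) / (L ^ 4) ^ ((k : ℝ) / 2) := Real.div_rpow hn.le (by positivity) _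
    _ ≤ (4 * (ℓ : ℝ) ^ k * (k : ℝ) ^ ((k : ℝ) / 2 + 1) * (n : ℝ) ^ ((k : ℝ) / 2)) /
        ((k.factorial : ℝ) * (2 : ℝ) ^ ((k : ℝ) / 2) * (D : ℝ) ^ ((k : ℝ) / 2 - 1)) := by
        have : 0 ≤ (n : ℝ) ^ ((k : ℝ) / 2) := by positivity
        refine div_le_div₀ (by positivity) ?_ hden0 hden
        nlinarith
    _ = 4 * (ℓ : ℝ) ^ k * (k : ℝ) ^ ((k : ℝ) / 2 + 1)
        / ((k.factorial : ℝ) * (2 : ℝ) ^ ((k : ℝ) / 2))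
        * (n : ℝ) ^ ((k : ℝ) / 2) / (δ ^ 2 * (D : ℝ) ^ ((k : ℝ) / 2 - 1)) * δ ^ 2 := by
        field_simp
    _ ≤ m * δ ^ 2 := by gcongr

open Classical in
/-- Recovery theorem: there are absolute constants `r₀, C₀, c, n₀` such
that for `n ≥ n₀`, `k ≥ 3`, `r ≥ r₀`, `ℓ ≥ 2`, `D = rk`, `Dℓ < 0.3 log n / log log n`,
`δ ∈ (0,1]` with `δ² n^{0.1} ≥ c log n`, and sample size
`binom(n,k) ≥ m ≥ (4ℓ^k k^{k/2+1}/(k! 2^{k/2}))·n^{k/2}/(δ² D^{k/2−1})` with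
`p = m/binom(n,k)`, there is a randomized estimator `x̂` (a function of the observation `z`
and of internal randomness over a finite seed space, independent of `z`) whose success
probability under `P_x` is at least `1 − C₀·ℓ^{−kD}` for every planted `x ∈ {±1}^n`:
it outputs `x` exactly when `k` is odd, and one of `x, −x` when `k` is even. -/
theorem stmt17 : ∃ (r₀ : ℕ) (C₀ c : ℝ) (n₀ : ℕ), ∀ n k r ℓ : ℕ,
    n₀ ≤ n → 3 ≤ k → r₀ ≤ r → 2 ≤ ℓ →
    ((r * k * ℓ : ℕ) : ℝ) < 0.3 * Real.log n / Real.log (Real.log n) →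
    ∀ δ : ℝ, 0 < δ → δ ≤ 1 → c * Real.log n ≤ δ ^ 2 * (n : ℝ) ^ (0.1 : ℝ) →
    ∀ m : ℕ, m ≤ n.choose k →
    4 * (ℓ : ℝ) ^ k * (k : ℝ) ^ ((k : ℝ) / 2 + 1)
        / ((k.factorial : ℝ) * (2 : ℝ) ^ ((k : ℝ) / 2))
        * (n : ℝ) ^ ((k : ℝ) / 2) / (δ ^ 2 * ((r * k : ℕ) : ℝ) ^ ((k : ℝ) / 2 - 1))
      ≤ (m : ℝ) →
    ∃ (M : ℕ) (w : Fin M → ℝ) (est : (KSet n k → ℝ) → Fin M → (Fin n → ℝ)),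
      (∀ seed, 0 ≤ w seed) ∧ (∑ seed, w seed = 1) ∧
      ∀ x : Fin n → ℝ, (∀ i, x i = 1 ∨ x i = -1) →
        (Odd k →
          1 - C₀ * (((ℓ : ℝ) ^ (k * (r * k)))⁻¹)
            ≤ expP n k ((m : ℝ) / (n.choose k : ℝ)) δ x
                (fun z => ∑ seed, w seed * (if est z seed = x then 1 else 0))) ∧
        (Even k →
          1 - C₀ * (((ℓ : ℝ) ^ (k * (r * k)))⁻¹)
            ≤ expP n k ((m : ℝ) / (n.choose k : ℝ)) δ x
                (fun z => ∑ seed, w seed *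
                  (if est z seed = x ∨ est z seed = fun i => -(x i) then 1 else 0))) := by
  obtain ⟨n₀, hn₀⟩ := exists_threshold
  refine ⟨1, 4, 0, n₀, ?_⟩
  intro n k r ℓ hn hk hr hℓ hD δ hδ0 hδ1 _ m hm hms
  obtain ⟨t1, t2, t3, t4, t5, t6⟩ := hn₀ n hn
  have hDL : ((r * k : ℕ) : ℝ) * ℓ ≤ Real.log n := by
    have h : 0.3 * Real.log n / Real.log (Real.log n) ≤ Real.log n := by
      rw [div_le_iff₀ (by linarith)]
      nlinarith
    push_cast at hD ⊢
    linarith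
  have hℓ' : (2 : ℝ) ≤ ℓ := by exact_mod_cast hℓ
  have hD0 : (0 : ℝ) ≤ ((r * k : ℕ) : ℝ) := Nat.cast_nonneg _
  have hkD : k ≤ r * k := Nat.le_mul_of_pos_left k hr
  have hkD' : (k : ℝ) ≤ ((r * k : ℕ) : ℝ) := by exact_mod_cast hkD
  have hDL' : ((r * k : ℕ) : ℝ) ≤ Real.log n := by nlinarith
  have hkn : k < n := by
    have : (k : ℝ) < n := by linarith
    exact_mod_cast this
  have hn0 : (0 : ℝ) < n := by exact_mod_cast t6
  have hsig := signal_lower_bound hk hkD (by omega) hδ0 hDL' t4 hms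
  have hA : Real.log n + ((k * (r * k) : ℕ) : ℝ) * Real.log ℓ ≤ m * δ ^ 2 / (8 * n) := by
    have h1 : ((k * (r * k) : ℕ) : ℝ) * Real.log ℓ ≤ Real.log n ^ 2 := by
      have hlog : Real.log ℓ ≤ ℓ := Real.log_le_self (by linarith)
      calc ((k * (r * k) : ℕ) : ℝ) * Real.log ℓ = k * (((r * k : ℕ) : ℝ) * Real.log ℓ) := by
            push_cast; ring
        _ ≤ Real.log n * (((r * k : ℕ) : ℝ) * ℓ) := by
            have : 0 ≤ Real.log ℓ := Real.log_nonneg (by linarith)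
            gcongr
            linarith
        _ ≤ Real.log n * Real.log n := by gcongr
        _ = _ := by ring
    rw [div_le_iff₀ (by positivity)] at hsig
    rw [le_div_iff₀ (by positivity)]
    have hL6 : 0 < Real.log n ^ 6 := by positivity
    refine le_of_mul_le_mul_right ?_ hL6
    calc (Real.log n + ((k * (r * k) : ℕ) : ℝ) * Real.log ℓ) * (8 * n) * Real.log n ^ 6
        ≤ (Real.log n + Real.log n ^ 2) * (8 * n) * Real.log n ^ 6 := by gcongr
      _ = n * (8 * Real.log n ^ 6 * (Real.log n + Real.log n ^ 2)) := by ring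
      _ ≤ n * (n : ℝ) ^ (1 / 2 : ℝ) := by gcongr
      _ ≤ _ := hsig
  have hq : n * Real.exp (-(m * δ ^ 2 / (8 * n))) ≤ ((ℓ : ℝ) ^ (k * (r * k)))⁻¹ := by
    have h := Real.exp_le_exp.2 (neg_le_neg hA)
    rw [neg_add, Real.exp_add, Real.exp_neg (Real.log n), Real.exp_log hn0,
      Real.exp_neg (_ * Real.log ℓ), Real.exp_nat_mul, Real.exp_log (by linarith)] at h
    calc _ ≤ n * ((n : ℝ)⁻¹ * ((ℓ : ℝ) ^ (k * (r * k)))⁻¹) := by gcongr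
      _ = _ := by field_simp
  have hq1 : n * Real.exp (-(m * δ ^ 2 / (8 * n))) ≤ 1 :=
    hq.trans (inv_le_one_of_one_le₀ (one_le_pow₀ (by linarith)))
  obtain ⟨f, hf⟩ := exists_corr_maximizer n k
  refine ⟨1, fun _ => 1, fun z _ => f z, fun _ => zero_le_one, by simp, fun x hx => ⟨?_, ?_⟩⟩
  · intro hodd
    refine le_trans (by linarith) (one_sub_le_expP_of_maximizer (by omega) hkn hm hδ0.le hδ1 hq1 hf
      hx (fun z => ?_) (fun z hz => ?_) (fun he => absurd hodd (Nat.not_odd_iff_even.2 he)))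
    · exact sum_nonneg fun _ _ => by positivity
    · simp [hz]
  · intro _
    refine le_trans (by linarith) (one_sub_le_expP_of_maximizer (by omega) hkn hm hδ0.le hδ1 hq1 hf
      hx (fun z => ?_) (fun z hz => ?_) (fun _ z hz => ?_))
    · exact sum_nonneg fun _ _ => by positivity
    · simp [hz]
    · simp [hz]
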